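/- Case (2,2,0) of Inverse_L completeness: For typed ASP λ-calculus formulas H and G in β-normal form where H has order 2 and G has order 0, if there exists a typed ASP λ-calculus formula F of order 2 in β-normal form with H = F @ G, then Inverse_L(H,G) returns a non-null formula F' with H = F' @ G. -/

import Mathlib

/- Typed Answer Set Programming lambda calculus (Baral, Dzifcak, Gonzalez, Gottesman).

   Base types: e (terms), a (atoms), l (literals), g (gen-literals),
   d (bodies), h (heads), t (satisfiability values).  Terms are de Bruijn
   lambda terms over ASP connectives; function and predicate symbols are
   constants of iterated arrow type applied via `app`. -/

namespace ASPLambda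

inductive BTy : Type
  | e | a | l | g | d | h | t
deriving DecidableEq, Repr

inductive Ty : Type
  | base : BTy → Ty
  | arrow : Ty → Ty → Ty
deriving DecidableEq, Repr

/-- The order of a type: base types have order 0,
    `order (A → B) = max (order A + 1) (order B)`. -/
def Ty.order : Ty → ℕ
  | .base _ => 0
  | .arrow A B => max (A.order + 1) B.order

/-- Iterated arrow type `A → ⋯ → A → B` with `n` arguments. -/
def Ty.arrN : ℕ → Ty → Ty → Ty
  | 0, _, B => B
  | n + 1, A, B => .arrow A (Ty.arrN n A B)

/-- ASP typed terms (de Bruijn representation).  `neg` is classical negation ¬,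
    `naf` is negation as failure (not), `disj` is `or`, `conj` is `,`,
    `rule h b` is `h ← b.`, `ruleH h` is `h ←.`, `ruleB b` is `← b.`,
    and `seq` juxtaposes rules/programs. -/
inductive Tm : Type
  | var : ℕ → Tm
  | const : String → Ty → Tm
  | app : Tm → Tm → Tm
  | lam : Ty → Tm → Tm
  | neg : Tm → Tm
  | naf : Tm → Tm
  | disj : Tm → Tm → Tm
  | conj : Tm → Tm → Tm
  | rule : Tm → Tm → Tm
  | ruleH : Tm → Tm
  | ruleB : Tm → Tm
  | seq : Tm → Tm → Tm
deriving DecidableEq, Repr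

namespace Tm

/-- de Bruijn shift by `dpl` of indices ≥ `c`. -/
def shift (dpl c : ℕ) : Tm → Tm
  | .var n => if n < c then .var n else .var (n + dpl)
  | .const s A => .const s A
  | .app f x => .app (f.shift dpl c) (x.shift dpl c)
  | .lam A b => .lam A (b.shift dpl (c + 1))
  | .neg x => .neg (x.shift dpl c)
  | .naf x => .naf (x.shift dpl c)
  | .disj x y => .disj (x.shift dpl c) (y.shift dpl c)
  | .conj x y => .conj (x.shift dpl c) (y.shift dpl c)
  | .rule x y => .rule (x.shift dpl c) (y.shift dpl c)
  | .ruleH x => .ruleH (x.shift dpl c)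
  | .ruleB x => .ruleB (x.shift dpl c)
  | .seq x y => .seq (x.shift dpl c) (y.shift dpl c)

/-- Substitution of `s` for de Bruijn index `j` (decrementing higher indices). -/
def subst : ℕ → Tm → Tm → Tm
  | j, s, .var n => if n = j then s else if j < n then .var (n - 1) else .var n
  | _, _, .const c A => .const c A
  | j, s, .app f x => .app (subst j s f) (subst j s x)
  | j, s, .lam A b => .lam A (subst (j + 1) (s.shift 1 0) b)
  | j, s, .neg x => .neg (subst j s x)
  | j, s, .naf x => .naf (subst j s x)
  | j, s, .disj x y => .disj (subst j s x) (subst j s y)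
  | j, s, .conj x y => .conj (subst j s x) (subst j s y)
  | j, s, .rule x y => .rule (subst j s x) (subst j s y)
  | j, s, .ruleH x => .ruleH (subst j s x)
  | j, s, .ruleB x => .ruleB (subst j s x)
  | j, s, .seq x y => .seq (subst j s x) (subst j s y)

/-- Whether the de Bruijn index `k` occurs free. -/
def hasFree (k : ℕ) : Tm → Bool
  | .var n => n == k
  | .const _ _ => false
  | .app f x => f.hasFree k || x.hasFree k
  | .lam _ b => b.hasFree (k + 1)
  | .neg x => x.hasFree k
  | .naf x => x.hasFree k
  | .disj x y => x.hasFree k || y.hasFree k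
  | .conj x y => x.hasFree k || y.hasFree k
  | .rule x y => x.hasFree k || y.hasFree k
  | .ruleH x => x.hasFree k
  | .ruleB x => x.hasFree k
  | .seq x y => x.hasFree k || y.hasFree k

/-- Every abstractor binds (at least one occurrence of) its variable (λI condition). -/
def lamI : Tm → Bool
  | .var _ => true
  | .const _ _ => true
  | .app f x => f.lamI && x.lamI
  | .lam _ b => b.lamI && b.hasFree 0
  | .neg x => x.lamI
  | .naf x => x.lamI
  | .disj x y => x.lamI && y.lamI
  | .conj x y => x.lamI && y.lamI
  | .rule x y => x.lamI && y.lamI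
  | .ruleH x => x.lamI
  | .ruleB x => x.lamI
  | .seq x y => x.lamI && y.lamI

/-- A λ-term in the sense of the signature: a variable or a constant. -/
def isVarOrConst : Tm → Bool
  | .var _ => true
  | .const _ _ => true
  | _ => false

/-- Contains no lambda abstractor. -/
def noLam : Tm → Bool
  | .var _ => true
  | .const _ _ => true
  | .app f x => f.noLam && x.noLam
  | .lam _ _ => false
  | .neg x => x.noLam
  | .naf x => x.noLam
  | .disj x y => x.noLam && y.noLam
  | .conj x y => x.noLam && y.noLam
  | .rule x y => x.noLam && y.noLam
  | .ruleH x => x.noLam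
  | .ruleB x => x.noLam
  | .seq x y => x.noLam && y.noLam

/-- The head of an application spine is a variable. -/
def headIsVar : Tm → Bool
  | .var _ => true
  | .app f _ => f.headIsVar
  | _ => false

/-- Contains no application whose head is a (bound) variable. -/
def noVarApp : Tm → Bool
  | .var _ => true
  | .const _ _ => true
  | .app f x => !(f.headIsVar) && f.noVarApp && x.noVarApp
  | .lam _ b => b.noVarApp
  | .neg x => x.noVarApp
  | .naf x => x.noVarApp
  | .disj x y => x.noVarApp && y.noVarApp
  | .conj x y => x.noVarApp && y.noVarApp
  | .rule x y => x.noVarApp && y.noVarApp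
  | .ruleH x => x.noVarApp
  | .ruleB x => x.noVarApp
  | .seq x y => x.noVarApp && y.noVarApp

/-- Number of symbols of a formula (its size). -/
def size : Tm → ℕ
  | .var _ => 1
  | .const _ _ => 1
  | .app f x => f.size + x.size + 1
  | .lam _ b => b.size + 1
  | .neg x => x.size + 1
  | .naf x => x.size + 1
  | .disj x y => x.size + y.size + 1
  | .conj x y => x.size + y.size + 1
  | .rule x y => x.size + y.size + 1
  | .ruleH x => x.size + 1
  | .ruleB x => x.size + 1
  | .seq x y => x.size + y.size + 1

/-- Number of lambda abstractors; in a formula (where every abstractor binds a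
    variable and every variable is bound) this is the number of variables. -/
def numAbs : Tm → ℕ
  | .var _ => 0
  | .const _ _ => 0
  | .app f x => f.numAbs + x.numAbs
  | .lam _ b => b.numAbs + 1
  | .neg x => x.numAbs
  | .naf x => x.numAbs
  | .disj x y => x.numAbs + y.numAbs
  | .conj x y => x.numAbs + y.numAbs
  | .rule x y => x.numAbs + y.numAbs
  | .ruleH x => x.numAbs
  | .ruleB x => x.numAbs
  | .seq x y => x.numAbs + y.numAbs

/-- Replacement `t(A : B)`: replace every occurrence of `A` in `t` by `B`
    (shifting under binders). -/
def replace : Tm → Tm → Tm → Tm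
  | .var n, A, B => if Tm.var n = A then B else .var n
  | .const s T, A, B => if Tm.const s T = A then B else .const s T
  | .app f x, A, B => if Tm.app f x = A then B else .app (f.replace A B) (x.replace A B)
  | .lam T b, A, B => if Tm.lam T b = A then B else .lam T (b.replace (A.shift 1 0) (B.shift 1 0))
  | .neg x, A, B => if Tm.neg x = A then B else .neg (x.replace A B)
  | .naf x, A, B => if Tm.naf x = A then B else .naf (x.replace A B)
  | .disj x y, A, B => if Tm.disj x y = A then B else .disj (x.replace A B) (y.replace A B)
  | .conj x y, A, B => if Tm.conj x y = A then B else .conj (x.replace A B) (y.replace A B)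
  | .rule x y, A, B => if Tm.rule x y = A then B else .rule (x.replace A B) (y.replace A B)
  | .ruleH x, A, B => if Tm.ruleH x = A then B else .ruleH (x.replace A B)
  | .ruleB x, A, B => if Tm.ruleB x = A then B else .ruleB (x.replace A B)
  | .seq x y, A, B => if Tm.seq x y = A then B else .seq (x.replace A B) (y.replace A B)

/-- Simultaneous sequential replacement `t(A₁,…,Aₙ : B₁,…,Bₙ)`. -/
def replaceList : Tm → List (Tm × Tm) → Tm
  | t, [] => t
  | t, (A, B) :: r => (t.replace A B).replaceList r

/-- Iterated abstraction `λv₁ … λvₙ. b`. -/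
def lams : List Ty → Tm → Tm
  | [], b => b
  | A :: r, b => .lam A (Tm.lams r b)

/-- Iterated application `f @ x₁ @ ⋯ @ xₙ`. -/
def apps : Tm → List Tm → Tm
  | f, [] => f
  | f, x :: r => Tm.apps (.app f x) r

end Tm

/-- Typing relation for ASP typed terms (Definition "ASP Typed Term").
    The coercion rules carry the side condition that the coerced term
    is not a λ-term (i.e. not a variable or constant). -/
inductive HasType : List Ty → Tm → Ty → Prop
  | var {Γ n A} : Γ[n]? = some A → HasType Γ (.var n) A
  | const {Γ s A} : HasType Γ (.const s A) A
  | app {Γ f x A B} : HasType Γ f (.arrow A B) → HasType Γ x A → HasType Γ (.app f x) B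
  | lam {Γ b A B} : HasType (A :: Γ) b B → HasType Γ (.lam A b) (.arrow A B)
  | atomLit {Γ x} : HasType Γ x (.base .a) → x.isVarOrConst = false → HasType Γ x (.base .l)
  | negLit {Γ x} : HasType Γ x (.base .a) → HasType Γ (.neg x) (.base .l)
  | litGen {Γ x} : HasType Γ x (.base .l) → x.isVarOrConst = false → HasType Γ x (.base .g)
  | nafGen {Γ x} : HasType Γ x (.base .l) → HasType Γ (.naf x) (.base .g)
  | litHead {Γ x} : HasType Γ x (.base .l) → x.isVarOrConst = false → HasType Γ x (.base .h)
  | disj {Γ x y} : HasType Γ x (.base .h) → HasType Γ y (.base .h) →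
      HasType Γ (.disj x y) (.base .h)
  | genBody {Γ x} : HasType Γ x (.base .g) → x.isVarOrConst = false → HasType Γ x (.base .d)
  | conj {Γ x y} : HasType Γ x (.base .d) → HasType Γ y (.base .d) →
      HasType Γ (.conj x y) (.base .d)
  | rule {Γ x y} : HasType Γ x (.base .h) → HasType Γ y (.base .d) →
      HasType Γ (.rule x y) (.base .t)
  | ruleH {Γ x} : HasType Γ x (.base .h) → HasType Γ (.ruleH x) (.base .t)
  | ruleB {Γ y} : HasType Γ y (.base .d) → HasType Γ (.ruleB y) (.base .t)
  | seq {Γ x y} : HasType Γ x (.base .t) → HasType Γ y (.base .t) →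
      HasType Γ (.seq x y) (.base .t)

/-- A typed ASP λ-calculus formula of type `A`: a closed well-typed ASP term
    in which every abstractor binds a variable. -/
structure IsFormula (t : Tm) (A : Ty) : Prop where
  typed : HasType [] t A
  lamI : t.lamI = true

/-- One step of β-reduction (with congruence through all constructors). -/
inductive Step : Tm → Tm → Prop
  | beta {A b x} : Step (.app (.lam A b) x) (Tm.subst 0 x b)
  | appL {f f' x} : Step f f' → Step (.app f x) (.app f' x)
  | appR {f x x'} : Step x x' → Step (.app f x) (.app f x')
  | lam {A b b'} : Step b b' → Step (.lam A b) (.lam A b')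
  | neg {x x'} : Step x x' → Step (.neg x) (.neg x')
  | naf {x x'} : Step x x' → Step (.naf x) (.naf x')
  | disjL {x x' y} : Step x x' → Step (.disj x y) (.disj x' y)
  | disjR {x y y'} : Step y y' → Step (.disj x y) (.disj x y')
  | conjL {x x' y} : Step x x' → Step (.conj x y) (.conj x' y)
  | conjR {x y y'} : Step y y' → Step (.conj x y) (.conj x y')
  | ruleL {x x' y} : Step x x' → Step (.rule x y) (.rule x' y)
  | ruleR {x y y'} : Step y y' → Step (.rule x y) (.rule x y')
  | ruleH {x x'} : Step x x' → Step (.ruleH x) (.ruleH x')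
  | ruleB {x x'} : Step x x' → Step (.ruleB x) (.ruleB x')
  | seqL {x x' y} : Step x x' → Step (.seq x y) (.seq x' y)
  | seqR {x y y'} : Step y y' → Step (.seq x y) (.seq x y')

/-- Multi-step β-reduction. -/
abbrev Steps : Tm → Tm → Prop := Relation.ReflTransGen Step

/-- β-normal form: no β-redex occurrences, i.e. no step is possible. -/
def Tm.IsNormal (t : Tm) : Prop := ∀ u, ¬ Step t u

/-- `N` is the β-normal form of `M`. -/
def NormalizesTo (M N : Tm) : Prop := Steps M N ∧ N.IsNormal

/-- `Occurs P Q`: the term `P` occurs in `Q` (`P` is a sub-term of `Q`). -/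
inductive Occurs : Tm → Tm → Prop
  | refl (t : Tm) : Occurs t t
  | appL {P M N} : Occurs P M → Occurs P (.app M N)
  | appR {P M N} : Occurs P N → Occurs P (.app M N)
  | lam {P A M} : Occurs P M → Occurs P (.lam A M)
  | neg {P M} : Occurs P M → Occurs P (.neg M)
  | naf {P M} : Occurs P M → Occurs P (.naf M)
  | disjL {P M N} : Occurs P M → Occurs P (.disj M N)
  | disjR {P M N} : Occurs P N → Occurs P (.disj M N)
  | conjL {P M N} : Occurs P M → Occurs P (.conj M N)
  | conjR {P M N} : Occurs P N → Occurs P (.conj M N)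
  | ruleL {P M N} : Occurs P M → Occurs P (.rule M N)
  | ruleR {P M N} : Occurs P N → Occurs P (.rule M N)
  | ruleH {P M} : Occurs P M → Occurs P (.ruleH M)
  | ruleB {P M} : Occurs P M → Occurs P (.ruleB M)
  | seqL {P M N} : Occurs P M → Occurs P (.seq M N)
  | seqR {P M N} : Occurs P N → Occurs P (.seq M N)

/-- The `Inverse_L` algorithm, as a relation: `InvL H G F` holds exactly when
    one of the four cases of `Inverse_L(H,G)` applies and produces the
    (non-null) output `F`.  Variables `v₁,…,v_s` are represented by de Bruijn
    indices: under binders `λv₁…λv_s`, the variable `v_k` is index `s - k`. -/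
inductive InvL : Tm → Tm → Tm → Prop
  | case1 (H : Tm) (A : Ty) :
      InvL H (.lam A (.var 0)) (.lam (.arrow A A) (.app (.var 0) (H.shift 1 0)))
  | case2 (H G : Tm) (A : Ty) :
      Occurs G H → HasType [] G A →
      InvL H G (.lam A ((H.shift 1 0).replace (G.shift 1 0) (.var 0)))
  | case3 (H G : Tm) (W : Ty) (Js : List (Tm × List Tm)) (tys : List Ty)
      (ks : List ℕ) (s m : ℕ) :
      (∀ A : Ty, G ≠ .lam A (.var 0)) →
      Js ≠ [] →
      tys.length = s → 1 ≤ s → s ≤ m → ks.length = m →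
      (∀ k ∈ ks, 1 ≤ k ∧ k ≤ s) →
      (∀ Ja ∈ Js, Ja.2.length = m ∧ Occurs Ja.1 H ∧ (∀ x ∈ Ja.2, Occurs x Ja.1) ∧
        G = Tm.lams tys ((Ja.1.shift s 0).replaceList
              ((Ja.2.map (fun x => x.shift s 0)).zip
                (ks.map (fun k => Tm.var (s - k)))))) →
      InvL H G (.lam W ((H.shift 1 0).replaceList
        (Js.map (fun Ja => (Ja.1.shift 1 0,
          Tm.apps (.var 0) (ks.map (fun k => (Ja.2.getD (k - 1) Ja.1).shift 1 0)))))))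
  | case4 (H G : Tm) (W W' : Ty) (tysI tysS : List Ty) (J J1 : Tm)
      (args : List Tm) (ks : List ℕ) (i s : ℕ) :
      tysI.length = i → tysS.length = s - i → i < s →
      args.length = s - i → ks.length = s - i →
      (∀ k ∈ ks, i + 1 ≤ k ∧ k ≤ s) →
      H = Tm.lams tysI J →
      Occurs J1 J → (∀ x ∈ args, Occurs x J1) →
      G = .lam W ((J.shift 1 0).replace (J1.shift 1 0)
            (Tm.apps (.var 0) (ks.map (fun k => (args.getD (k - i - 1) J1).shift 1 0)))) →
      InvL H G (.lam W' (Tm.lams tysI (.app (.var i)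
        (Tm.lams tysS ((J1.shift (s + 1) 0).replaceList
          ((args.map (fun x => x.shift (s + 1) 0)).zip
            (ks.map (fun k => Tm.var (s - k)))))))))

/-- The `Inverse_R` algorithm, as a relation: `InvR H G F` holds exactly when
    one of the four cases of `Inverse_R(H,G)` applies and produces the
    (non-null) output `F`. -/
inductive InvR : Tm → Tm → Tm → Prop
  | case1 (H G J F : Tm) (A : Ty) :
      G = .lam A (.app (.var 0) (J.shift 1 0)) →
      InvL H J F → InvR H G F
  | case2 (H G J : Tm) (A : Ty) :
      Occurs J H → HasType [] J A →
      G = .lam A ((H.shift 1 0).replace (J.shift 1 0) (.var 0)) →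
      InvR H G J
  | case3 (H G : Tm) (W : Ty) (Js : List (Tm × List Tm)) (tys : List Ty)
      (ks : List ℕ) (s m : ℕ) (J1 : Tm) (args1 : List Tm) :
      (∀ (A : Ty) (J : Tm), G ≠ .lam A (.app (.var 0) (J.shift 1 0))) →
      Js ≠ [] → Js.head? = some (J1, args1) →
      tys.length = s → 1 ≤ s → s ≤ m → ks.length = m →
      (∀ k ∈ ks, 1 ≤ k ∧ k ≤ m) →
      (∀ Ja ∈ Js, Ja.2.length = m ∧ Occurs Ja.1 H ∧ (∀ x ∈ Ja.2, Occurs x Ja.1)) →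
      G = .lam W ((H.shift 1 0).replaceList
        (Js.map (fun Ja => (Ja.1.shift 1 0,
          Tm.apps (.var 0) (ks.map (fun k => (Ja.2.getD (k - 1) Ja.1).shift 1 0)))))) →
      InvR H G (Tm.lams tys ((J1.shift s 0).replaceList
        ((args1.map (fun x => x.shift s 0)).zip (ks.map (fun k => Tm.var (s - k))))))
  | case4 (H G : Tm) (W W' : Ty) (tysI tysS : List Ty) (J J1 : Tm)
      (args : List Tm) (ks : List ℕ) (i s : ℕ) :
      tysI.length = i → tysS.length = s - i → i < s →
      args.length = s - i → ks.length = s - i →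
      (∀ k ∈ ks, i + 1 ≤ k ∧ k ≤ s) →
      H = Tm.lams tysI J →
      Occurs J1 J → (∀ x ∈ args, Occurs x J1) →
      G = .lam W (Tm.lams tysI (.app (.var i)
        (Tm.lams tysS ((J1.shift (s + 1) 0).replaceList
          ((args.map (fun x => x.shift (s + 1) 0)).zip
            (ks.map (fun k => Tm.var (s - k)))))))) →
      InvR H G (.lam W' ((J.shift 1 0).replace (J1.shift 1 0)
        (Tm.apps (.var 0) (ks.map (fun k => (args.getD (k - i - 1) J1).shift 1 0)))))

/-! ### The Answer Set Programming language proper -/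

/-- ASP terms: constants, or function symbols applied to terms. -/
inductive ASPTerm : Tm → Prop
  | const (s : String) : ASPTerm (.const s (.base .e))
  | fn (f : String) (args : List Tm) :
      args ≠ [] → (∀ x ∈ args, ASPTerm x) →
      ASPTerm (Tm.apps (.const f (Ty.arrN args.length (.base .e) (.base .e))) args)

/-- ASP atoms: predicate symbols applied to terms. -/
inductive ASPAtom : Tm → Prop
  | pred (p : String) (args : List Tm) :
      (∀ x ∈ args, ASPTerm x) →
      ASPAtom (Tm.apps (.const p (Ty.arrN args.length (.base .e) (.base .a))) args)

/-- ASP literals: atoms or negated atoms. -/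
inductive ASPLit : Tm → Prop
  | atom {x} : ASPAtom x → ASPLit x
  | neg {x} : ASPAtom x → ASPLit (.neg x)

/-- ASP gen-literals: literals or naf-literals. -/
inductive ASPGen : Tm → Prop
  | lit {x} : ASPLit x → ASPGen x
  | naf {x} : ASPLit x → ASPGen (.naf x)

/-- Heads of ASP rules: `or`-connected literals. -/
inductive ASPHead : Tm → Prop
  | lit {x} : ASPLit x → ASPHead x
  | disj {x y} : ASPHead x → ASPHead y → ASPHead (.disj x y)

/-- Bodies of ASP rules: `,`-connected gen-literals. -/
inductive ASPBody : Tm → Prop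
  | gen {x} : ASPGen x → ASPBody x
  | conj {x y} : ASPBody x → ASPBody y → ASPBody (.conj x y)

/-- ASP rules `L₀ or … or L_k ← L_{k+1},…, not L_n.` (including facts and
    constraints). -/
inductive ASPRule : Tm → Prop
  | mk {h b} : ASPHead h → ASPBody b → ASPRule (.rule h b)
  | fact {h} : ASPHead h → ASPRule (.ruleH h)
  | constr {b} : ASPBody b → ASPRule (.ruleB b)

/-- ASP programs: `.`-separated sequences of ASP rules. -/
inductive ASPProg : Tm → Prop
  | single {r} : ASPRule r → ASPProg r
  | seq {x y} : ASPProg x → ASPProg y → ASPProg (.seq x y)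

/-- Expressions of the ASP language, by base type. -/
def ASPExpr (M : Tm) : BTy → Prop
  | .e => ASPTerm M
  | .a => ASPAtom M
  | .l => ASPLit M
  | .g => ASPGen M
  | .h => ASPHead M
  | .d => ASPBody M
  | .t => ASPProg M

/-!
Substituting a normal `G` that is not an abstraction into a normal term creates no redex. So the
normal form of `F @ G` is `F @ G` itself or, when `F = λv.b`, the term `b[v := G]`; as `v` occurs
in `b` and `G` is closed, `G` occurs in `H` either way. Hence case (2) of `Inverse_L` applies, and
its output `λv.H(G:v)` is correct because putting the closed `G` back for `v` recovers `H`.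
-/

namespace Tm

theorem subst_shift (t s : Tm) (k : ℕ) : subst k s (t.shift 1 k) = t := by
  induction t generalizing k s with
  | var n =>
    rcases lt_or_ge n k with hnk | hkn
    · simp [shift, subst, hnk, hnk.ne, hnk.le]
    · simp [shift, subst, hkn.not_gt, Nat.lt_succ_of_le hkn, (Nat.lt_succ_of_le hkn).ne']
  | _ => simp_all [shift, subst]

theorem shift_one_injective (k : ℕ) : Function.Injective (shift 1 k) :=
  Function.LeftInverse.injective (g := subst k (var 0)) fun t => subst_shift t (var 0) k

theorem replace_self (t s : Tm) : t.replace t s = s := by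
  cases t <;> simp [replace]

/-- A term without free variables, expressed as invariance under all de Bruijn shifts, which is the
form in which `replace` and `subst` use it. -/
def IsClosed (t : Tm) : Prop :=
  ∀ n c, t.shift n c = t

theorem IsClosed.subst_replace_shift_of_eq {G t : Tm} (hG : G.IsClosed) {k : ℕ}
    (htG : t.shift 1 k = G) : subst k G ((t.shift 1 k).replace G (var k)) = t := by
  obtain rfl : t = G := shift_one_injective k (htG.trans (hG 1 k).symm)
  simp [hG 1 k, replace_self, subst]

theorem IsClosed.subst_replace_shift {G : Tm} (hG : G.IsClosed) (t : Tm) (k : ℕ) :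
    subst k G ((t.shift 1 k).replace G (var k)) = t := by
  induction t generalizing k with
  | var n =>
    refine (Classical.em _).elim hG.subst_replace_shift_of_eq fun htG => ?_
    have hrepl : ((var n).shift 1 k).replace G (var k) = (var n).shift 1 k := by
      simp only [shift] at htG ⊢
      split_ifs at htG ⊢ <;> simp only [replace, if_neg htG]
    rw [hrepl, subst_shift]
  | _ =>
    refine (Classical.em _).elim hG.subst_replace_shift_of_eq fun htG => ?_
    simp_all [shift, replace, subst, hG 1 0]

theorem IsClosed.occurs_subst {G : Tm} (hG : G.IsClosed) {t : Tm} {k : ℕ}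
    (hk : t.hasFree k = true) : Occurs G (subst k G t) := by
  induction t generalizing k with
  | var n =>
    rw [hasFree, beq_iff_eq] at hk
    simpa only [subst, if_pos hk] using Occurs.refl G
  | lam A b ih => simpa only [subst, hG 1 0] using Occurs.lam (ih hk)
  | _ => grind [Occurs, Tm.hasFree, Tm.subst]

theorem isNormal_var (n : ℕ) : (var n).IsNormal := nofun

theorem isNormal_app {f x : Tm} :
    (app f x).IsNormal ↔ (∀ A b, f ≠ lam A b) ∧ f.IsNormal ∧ x.IsNormal where
  mp h := ⟨by rintro A b rfl; exact h _ .beta, fun _ hu => h _ (.appL hu),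
    fun _ hu => h _ (.appR hu)⟩
  mpr
    | ⟨hf, _, _⟩, _, .beta => hf _ _ rfl
    | ⟨_, hf, _⟩, _, .appL hu => hf _ hu
    | ⟨_, _, hx⟩, _, .appR hu => hx _ hu

theorem isNormal_lam {A : Ty} {b : Tm} : (lam A b).IsNormal ↔ b.IsNormal where
  mp h _ hu := h _ (.lam hu)
  mpr h | _, .lam hu => h _ hu

theorem isNormal_neg {x : Tm} : (neg x).IsNormal ↔ x.IsNormal where
  mp h _ hu := h _ (.neg hu)
  mpr h | _, .neg hu => h _ hu

theorem isNormal_naf {x : Tm} : (naf x).IsNormal ↔ x.IsNormal where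
  mp h _ hu := h _ (.naf hu)
  mpr h | _, .naf hu => h _ hu

theorem isNormal_disj {x y : Tm} : (disj x y).IsNormal ↔ x.IsNormal ∧ y.IsNormal where
  mp h := ⟨fun _ hu => h _ (.disjL hu), fun _ hu => h _ (.disjR hu)⟩
  mpr
    | ⟨hx, _⟩, _, .disjL hu => hx _ hu
    | ⟨_, hy⟩, _, .disjR hu => hy _ hu

theorem isNormal_conj {x y : Tm} : (conj x y).IsNormal ↔ x.IsNormal ∧ y.IsNormal where
  mp h := ⟨fun _ hu => h _ (.conjL hu), fun _ hu => h _ (.conjR hu)⟩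
  mpr
    | ⟨hx, _⟩, _, .conjL hu => hx _ hu
    | ⟨_, hy⟩, _, .conjR hu => hy _ hu

theorem isNormal_rule {x y : Tm} : (rule x y).IsNormal ↔ x.IsNormal ∧ y.IsNormal where
  mp h := ⟨fun _ hu => h _ (.ruleL hu), fun _ hu => h _ (.ruleR hu)⟩
  mpr
    | ⟨hx, _⟩, _, .ruleL hu => hx _ hu
    | ⟨_, hy⟩, _, .ruleR hu => hy _ hu

theorem isNormal_ruleH {x : Tm} : (ruleH x).IsNormal ↔ x.IsNormal where
  mp h _ hu := h _ (.ruleH hu)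
  mpr h | _, .ruleH hu => h _ hu

theorem isNormal_ruleB {x : Tm} : (ruleB x).IsNormal ↔ x.IsNormal where
  mp h _ hu := h _ (.ruleB hu)
  mpr h | _, .ruleB hu => h _ hu

theorem isNormal_seq {x y : Tm} : (seq x y).IsNormal ↔ x.IsNormal ∧ y.IsNormal where
  mp h := ⟨fun _ hu => h _ (.seqL hu), fun _ hu => h _ (.seqR hu)⟩
  mpr
    | ⟨hx, _⟩, _, .seqL hu => hx _ hu
    | ⟨_, hy⟩, _, .seqR hu => hy _ hu

theorem IsNormal.eq_of_steps {M N : Tm} (hM : M.IsNormal) (h : Steps M N) : N = M :=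
  (Relation.reflTransGen_iff_eq hM).mp h

theorem shift_ne_lam {t : Tm} (ht : ∀ A b, t ≠ lam A b) (n c : ℕ) (A : Ty) (b : Tm) :
    t.shift n c ≠ lam A b := by
  cases t with
  | var m => simp only [shift]; split_ifs <;> simp
  | lam A' b' => exact absurd rfl (ht A' b')
  | _ => simp [shift]

theorem subst_ne_lam {f G : Tm} (hG : ∀ A b, G ≠ lam A b) (hf : ∀ A b, f ≠ lam A b) (k : ℕ)
    (A : Ty) (b : Tm) : subst k G f ≠ lam A b := by
  cases f with
  | var n => simp only [subst]; split_ifs <;> simp [hG]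
  | lam A' b' => exact absurd rfl (hf A' b')
  | _ => simp [subst]

theorem IsNormal.shift {t : Tm} (ht : t.IsNormal) (n c : ℕ) : (t.shift n c).IsNormal := by
  induction t generalizing c with
  | var m => simp only [Tm.shift]; split_ifs <;> exact isNormal_var _
  | const s A => exact ht
  | app f x ihf ihx =>
    obtain ⟨hflam, hf, hx⟩ := isNormal_app.mp ht
    exact isNormal_app.mpr ⟨shift_ne_lam hflam n c, ihf hf c, ihx hx c⟩
  | _ => simp_all [Tm.shift, isNormal_lam, isNormal_neg, isNormal_naf, isNormal_disj,
      isNormal_conj, isNormal_rule, isNormal_ruleH, isNormal_ruleB, isNormal_seq]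

theorem IsNormal.subst {G t : Tm} (ht : t.IsNormal) (hG : G.IsNormal)
    (hGlam : ∀ A b, G ≠ lam A b) (k : ℕ) : (Tm.subst k G t).IsNormal := by
  induction t generalizing G k with
  | var n => simp only [Tm.subst]; split_ifs <;> simp only [hG, isNormal_var]
  | const s A => exact ht
  | app f x ihf ihx =>
    obtain ⟨hflam, hf, hx⟩ := isNormal_app.mp ht
    exact isNormal_app.mpr ⟨subst_ne_lam hGlam hflam k, ihf hf hG hGlam k, ihx hx hG hGlam k⟩
  | lam A b ih =>
    exact isNormal_lam.mpr
      (ih (isNormal_lam.mp ht) (hG.shift 1 0) (shift_ne_lam hGlam 1 0) (k + 1))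
  | _ => simp_all [Tm.subst, isNormal_neg, isNormal_naf, isNormal_disj,
      isNormal_conj, isNormal_rule, isNormal_ruleH, isNormal_ruleB, isNormal_seq]

end Tm

theorem HasType.shift_eq_self {Γ : List Ty} {t : Tm} {A : Ty} (h : HasType Γ t A) (n : ℕ) {c : ℕ}
    (hc : Γ.length ≤ c) : t.shift n c = t := by
  induction h generalizing c with
  | var hget =>
    have hlt := (List.getElem?_eq_some_iff.mp hget).1
    exact if_pos (hlt.trans_le hc)
  | lam _ ih => rw [Tm.shift, ih (Nat.succ_le_succ hc)]
  | _ => simp_all [Tm.shift]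

theorem HasType.isClosed {t : Tm} {A : Ty} (h : HasType [] t A) : t.IsClosed :=
  fun n _ => h.shift_eq_self n (Nat.zero_le _)

theorem HasType.exists_eq_arrow_of_lam {Γ : List Ty} {T A : Ty} {b : Tm}
    (h : HasType Γ (.lam T b) A) : ∃ B, A = .arrow T B := by
  generalize ht : Tm.lam T b = t at h
  induction h with
  | lam => exact ⟨_, by rw [(Tm.lam.inj ht).1]⟩
  | _ => simp_all

theorem HasType.ne_lam_of_order_eq_zero {Γ : List Ty} {t : Tm} {A : Ty} (h : HasType Γ t A)
    (hA : A.order = 0) (T : Ty) (b : Tm) : t ≠ .lam T b := by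
  rintro rfl
  obtain ⟨B, rfl⟩ := h.exists_eq_arrow_of_lam
  simp [Ty.order] at hA

theorem Steps.eq_subst_of_isNormal {T : Ty} {b G H : Tm} (h : Steps (.app (.lam T b) G) H)
    (hb : b.IsNormal) (hG : G.IsNormal) (hGlam : ∀ A c, G ≠ .lam A c) (hH : H.IsNormal) :
    H = Tm.subst 0 G b := by
  rcases Relation.ReflTransGen.cases_head h with rfl | ⟨u, hu, huH⟩
  · exact absurd .beta (hH _)
  · cases hu with
    | beta => exact (hb.subst hG hGlam 0).eq_of_steps huH
    | appL hu => exact absurd hu (Tm.isNormal_lam.mpr hb _)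
    | appR hu => exact absurd hu (hG _)

theorem NormalizesTo.occurs {F G H : Tm} (h : NormalizesTo (.app F G) H) (hFI : F.lamI = true)
    (hF : F.IsNormal) (hG : G.IsNormal) (hGc : G.IsClosed) (hGlam : ∀ A b, G ≠ .lam A b) :
    Occurs G H := by
  by_cases hFlam : ∃ A b, F = .lam A b
  · obtain ⟨A, b, rfl⟩ := hFlam
    have hb0 : b.hasFree 0 = true := (Bool.and_eq_true_iff.mp hFI).2
    rw [Steps.eq_subst_of_isNormal h.1 (Tm.isNormal_lam.mp hF) hG hGlam h.2]
    exact hGc.occurs_subst hb0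
  · push Not at hFlam
    rw [(Tm.isNormal_app.mpr ⟨hFlam, hF, hG⟩).eq_of_steps h.1]
    exact .appR (.refl G)

theorem Tm.IsClosed.step_app_lam_replace {G : Tm} (hG : G.IsClosed) (H : Tm) (A : Ty) :
    Step (.app (.lam A ((H.shift 1 0).replace (G.shift 1 0) (.var 0))) G) H := by
  have hsubst : subst 0 G ((H.shift 1 0).replace (G.shift 1 0) (.var 0)) = H := by
    rw [hG 1 0, hG.subst_replace_shift]
  simpa only [hsubst] using
    Step.beta (A := A) (b := (H.shift 1 0).replace (G.shift 1 0) (.var 0)) (x := G)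

theorem invL_complete_case_220_general (H G : Tm) (B : Ty) (hG : HasType [] G B)
    (hGnf : G.IsNormal) (hGlam : ∀ A b, G ≠ .lam A b)
    (F : Tm) (hFI : F.lamI = true) (hFnf : F.IsNormal)
    (heq : NormalizesTo (Tm.app F G) H) :
    ∃ F', InvL H G F' ∧ NormalizesTo (Tm.app F' G) H :=
  have hocc : Occurs G H := heq.occurs hFI hFnf hGnf hG.isClosed hGlam
  ⟨_, .case2 H G B hocc hG, .single (hG.isClosed.step_app_lam_replace H B), heq.2⟩

/-- **Case `(2,2,0)` of `Inverse_L` completeness.**  For typed ASP λ-calculus formulas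
`H` and `G` in β-normal form where `H` has order 2 and `G` has order 0, if there
exists a typed ASP λ-calculus formula `F` of order 2 in β-normal form with
`H = F @ G`, then `Inverse_L(H,G)` returns a non-null formula `F'` with `H = F' @ G`. -/
theorem invL_complete_case_220 (H G : Tm) (A B : Ty)
    (hH : IsFormula H A) (hG : IsFormula G B)
    (hHnf : H.IsNormal) (hGnf : G.IsNormal)
    (hHo : A.order = 2) (hGo : B.order = 0)
    (F : Tm) (C : Ty) (hF : IsFormula F C) (hFo : C.order = 2) (hFnf : F.IsNormal)
    (heq : NormalizesTo (Tm.app F G) H) :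
    ∃ F', InvL H G F' ∧ NormalizesTo (Tm.app F' G) H :=
  invL_complete_case_220_general H G B hG.typed hGnf (hG.typed.ne_lam_of_order_eq_zero hGo)
    F hF.lamI hFnf heq

end ASPLambda
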